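/- Let μ_r be a simple eigenvalue of Σ, let Σ̃ = Σ + E with E self-adjoint and ‖E‖ ≤ g_r/4, and let u ∈ ℍ. Then there is an absolute constant C > 0 such that |σ_r²(Σ̃; u) − σ_r²(Σ; u)| ≤ C (‖Σ‖²/g_r²)(‖E‖/g_r) ‖u‖². Moreover, if σ_r(Σ; u) > 0, then |σ_r(Σ̃; u)/σ_r(Σ; u) − 1| ≤ C' σ_r^{−2}(Σ; u)(‖Σ‖²/g_r²)(‖E‖/g_r) ‖u‖² for an absolute constant C' > 0. -/

import Mathlib

open MeasureTheory ProbabilityTheory Filter Set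
open scoped RealInnerProductSpace Topology NNReal ENNReal

noncomputable section

namespace KLN

variable {H : Type*} [NormedAddCommGroup H] [InnerProductSpace ℝ H] [CompleteSpace H]

/-- Rank-one operator `x ⊗ y : w ↦ ⟪y, w⟫ • x`. -/
def outer (x y : H) : H →L[ℝ] H := (innerSL ℝ y).smulRight x

/-- Sample covariance of the sample `X`. -/
def sampleCov {n : ℕ} (X : Fin n → H) : H →L[ℝ] H :=
  (n : ℝ)⁻¹ • ∑ j : Fin n, outer (X j) (X j)

/-- Courant–Fischer: `lam A j` is the `(j+1)`-th largest eigenvalue of the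
positive self-adjoint compact operator `A` (eigenvalues repeated with multiplicity). -/
def lam (A : H →L[ℝ] H) (j : ℕ) : ℝ :=
  ⨆ V : {V : Submodule ℝ H // Module.finrank ℝ V = j + 1},
    ⨅ x : {x : H // x ∈ V.1 ∧ ‖x‖ = 1}, ⟪A x.1, x.1⟫

/-- `λ_δ(A) := max {λ ∈ A : (λ-δ, λ) ∩ A = ∅}`. -/
def lamDelta (δ : ℝ) (A : Set ℝ) : ℝ := sSup {l | l ∈ A ∧ Ioo (l - δ) l ∩ A = ∅}

/-- Top δ-cluster `T_δ(A) := A \ [0, λ_δ(A))`. -/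
def topCluster (δ : ℝ) (A : Set ℝ) : Set ℝ := A \ Ico 0 (lamDelta δ A)

/-- Successive residual sets after removing top clusters. -/
def resid (δ : ℝ) (A : Set ℝ) : ℕ → Set ℝ
  | 0 => A
  | k + 1 => resid δ A k \ topCluster δ (resid δ A k)

/-- `cluster δ A k` is the `(k+1)`-th δ-cluster `A_{k+1}` of `A`. -/
def cluster (δ : ℝ) (A : Set ℝ) (k : ℕ) : Set ℝ := topCluster δ (resid δ A k)

/-- The number of δ-clusters: `ν := min {j : A_{j+1} = ∅}`. -/
def nClusters (δ : ℝ) (A : Set ℝ) : ℕ := sInf {j | cluster δ A j = ∅}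

/-- `σ(A) ∪ {0}`. -/
def spec0 (A : H →L[ℝ] H) : Set ℝ := spectrum ℝ A ∪ {0}

/-- Direct sum of the eigenspaces of `A` for eigenvalues in `c`. -/
def clusterSpace (A : H →L[ℝ] H) (c : Set ℝ) : Submodule ℝ H :=
  ⨆ t ∈ c, Module.End.eigenspace (A : H →ₗ[ℝ] H) t

/-- `A` is self-adjoint, positive and nuclear (trace class). -/
def IsPosNuclear (A : H →L[ℝ] H) : Prop :=
  (∀ x y : H, ⟪A x, y⟫ = ⟪x, A y⟫) ∧ (∀ x : H, 0 ≤ ⟪A x, x⟫) ∧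
    ∃ (ι : Type) (e : HilbertBasis ι ℝ H), Summable fun i => ⟪A (e i), e i⟫

/-- Nuclear norm of a self-adjoint `A`: `‖A‖₁ = ∑_j √(λ_j(A∘A))`. -/
def nuclearNormSA (A : H →L[ℝ] H) : ℝ := ∑' j, Real.sqrt (lam (A.comp A) j)

/-- A covariance operator together with its spectral decomposition
`Σ = ∑_s μ_s P_s` where `μ 0 > μ 1 > ⋯ > 0` are the distinct eigenvalues (0-indexed;
zero projections `P s = 0` are allowed so that finite rank operators are covered)
and `P s` are the (finite rank, mutually orthogonal) spectral projections. -/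
structure CovOp (H : Type*) [NormedAddCommGroup H] [InnerProductSpace ℝ H]
    [CompleteSpace H] where
  toCLM : H →L[ℝ] H
  μ : ℕ → ℝ
  P : ℕ → H →L[ℝ] H
  μ_pos : ∀ s, 0 < μ s
  μ_anti : StrictAnti μ
  μ_lim : Tendsto μ atTop (nhds 0)
  P_symm : ∀ s (x y : H), ⟪P s x, y⟫ = ⟪x, P s y⟫
  P_idem : ∀ s (x : H), P s (P s x) = P s x
  P_orth : ∀ s t, s ≠ t → ∀ x : H, P s (P t x) = 0
  P_finrank : ∀ s, FiniteDimensional ℝ (LinearMap.range (P s).toLinearMap)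
  μm_summable : Summable fun s =>
    μ s * (Module.finrank ℝ (LinearMap.range (P s).toLinearMap) : ℝ)
  decomp : ∀ x : H, HasSum (fun s => μ s • P s x) (toCLM x)

namespace CovOp

/-- multiplicity `m_s` of `μ s`. -/
def m (S : CovOp H) (s : ℕ) : ℕ :=
  Module.finrank ℝ (LinearMap.range (S.P s).toLinearMap)

/-- `tr(Σ) = ∑_s μ_s m_s`. -/
def trace (S : CovOp H) : ℝ := ∑' s, S.μ s * (S.m s : ℝ)

/-- effective rank `r(Σ) = tr(Σ)/‖Σ‖`. -/
def effRank (S : CovOp H) : ℝ := S.trace / ‖S.toCLM‖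

/-- spectral gap `g_r = dist(μ_r, σ(Σ) \ {μ_r})`. -/
def g (S : CovOp H) (r : ℕ) : ℝ :=
  Metric.infDist (S.μ r) (spectrum ℝ S.toCLM \ {S.μ r})

/-- `ḡ_r = min_{s ≤ r} g_s`. -/
def gbar (S : CovOp H) (r : ℕ) : ℝ := ⨅ s : Fin (r + 1), S.g s

/-- `C_r x = ∑_{s ≠ r} (μ_r - μ_s)⁻¹ P_s x`. -/
def C (S : CovOp H) (r : ℕ) (x : H) : H :=
  ∑' s, (if s = r then 0 else (S.μ r - S.μ s)⁻¹) • S.P s x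

/-- `σ_r²(Σ; u) = μ_r ⟨Σ C_r u, C_r u⟩`. -/
def sigmaSq (S : CovOp H) (r : ℕ) (u : H) : ℝ :=
  S.μ r * ⟪S.toCLM (S.C r u), S.C r u⟫

/-- `Δ_r = {j : λ_j(Σ) = μ_r}` (eigenvalues `λ_j` with multiplicities, 0-indexed). -/
def Delta (S : CovOp H) (r : ℕ) : Set ℕ := {j | lam S.toCLM j = S.μ r}

/-- `μ r` is a simple eigenvalue with (unit) eigenvector `θ`, i.e. `P r = θ ⊗ θ`. -/
def SimpleVec (S : CovOp H) (r : ℕ) (θ : H) : Prop :=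
  ‖θ‖ = 1 ∧ ∀ x : H, S.P r x = ⟪θ, x⟫ • θ

/-- `L_r(E) x = P_r E C_r x + C_r E P_r x`, with `P_r = θ ⊗ θ`. -/
def L (S : CovOp H) (r : ℕ) (θ : H) (E : H →L[ℝ] H) (x : H) : H :=
  ⟪θ, E (S.C r x)⟫ • θ + S.C r (E (⟪θ, x⟫ • θ))

/-- the class `𝒮^{(r)}(rk, a, s0, u)`. -/
def memS (S : CovOp H) (r : ℕ) (u : H) (rk a s0 : ℝ) : Prop :=
  S.effRank ≤ rk ∧ ‖S.toCLM‖ / S.gbar r ≤ a ∧ s0 ^ 2 ≤ S.sigmaSq r u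

/-- the open class `𝒮̊^{(r)}(rk, a, s0, u)`. -/
def memSo (S : CovOp H) (r : ℕ) (u : H) (rk a s0 : ℝ) : Prop :=
  S.effRank < rk ∧ ‖S.toCLM‖ / S.gbar r < a ∧ s0 ^ 2 < S.sigmaSq r u

/-- `A_r(Σ) = 2 ∑_{s ≠ r} μ_r μ_s m_s / (μ_r - μ_s)²`. -/
def Ar (S : CovOp H) (r : ℕ) : ℝ :=
  2 * ∑' s, (if s = r then 0 else S.μ r * S.μ s * (S.m s : ℝ) / (S.μ r - S.μ s) ^ 2)

end CovOp

/-- `ν` is a centered Gaussian measure on `H` with covariance operator `A`. -/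
def IsGaussian [MeasurableSpace H] (ν : Measure H) (A : H →L[ℝ] H) : Prop :=
  IsProbabilityMeasure ν ∧
    ∀ u : H, ν.map (fun x => ⟪x, u⟫) = gaussianReal 0 (Real.toNNReal ⟪A u, u⟫)

/-- standard normal distribution function. -/
def Phi (x : ℝ) : ℝ := ((gaussianReal 0 1) (Iic x)).toReal

/-- `E ℓ(Z)`, `Z` standard normal. -/
def stdGaussExp (f : ℝ → ℝ) : ℝ := ∫ z, f z ∂(gaussianReal 0 1)

/-- Assumption 3.1 on the loss function. -/
structure IsLoss (f : ℝ → ℝ) (c₁ c₂ : ℝ) : Prop where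
  c₁_pos : 0 < c₁
  c₂_pos : 0 < c₂
  nonneg : ∀ x, 0 ≤ f x
  zero : f 0 = 0
  even : ∀ x, f (-x) = f x
  mono : MonotoneOn f (Ici 0)
  conv : ConvexOn ℝ (Ici 0) f
  bound : ∀ x, 0 ≤ x → f x ≤ c₁ * Real.exp (c₂ * x)

/-- the bias parameter `b_r = E⟨θ̂_r, θ_r⟩² - 1` for an estimator `est` based on a
sample of `k` i.i.d. observations from `ν`. -/
def biasParam [MeasurableSpace H] {k : ℕ} (ν : Measure H) (θ : H)
    (est : (Fin k → H) → H) : ℝ :=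
  (∫ x, ⟪est x, θ⟫ ^ 2 ∂(Measure.pi fun _ : Fin k => ν)) - 1

/-- `est` is a valid selection of the estimator `θ̂_r^δ` with `δ = τ‖Σ̂‖`: a unit vector,
aligned with `θ`, lying in the direct sum of eigenspaces of `Σ̂` for eigenvalues in the
`r`-th `δ`-cluster of `σ(Σ̂)` (whenever that space is nontrivial). -/
def clusterSel (r : ℕ) (θ : H) (τ : ℝ) {k : ℕ} (est : (Fin k → H) → H) : Prop :=
  ∀ x : Fin k → H,
    ‖est x‖ = 1 ∧ 0 ≤ ⟪est x, θ⟫ ∧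
      (clusterSpace (sampleCov x) (cluster (τ * ‖sampleCov x‖) (spec0 (sampleCov x)) r) ≠ ⊥ →
        est x ∈ clusterSpace (sampleCov x) (cluster (τ * ‖sampleCov x‖) (spec0 (sampleCov x)) r))

/-- `est` is a valid selection of the empirical eigenvector `θ̂_r`: a unit vector, aligned
with `θ`, which is an eigenvector of `Σ̂` for an eigenvalue `λ_j(Σ̂)` with `j ∈ Δ_r`
(whenever such an eigenvector exists). -/
def eigSel (S : CovOp H) (r : ℕ) (θ : H) {k : ℕ} (est : (Fin k → H) → H) : Prop :=
  ∀ x : Fin k → H,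
    ‖est x‖ = 1 ∧ 0 ≤ ⟪est x, θ⟫ ∧
      ((∃ v : H, ‖v‖ = 1 ∧ ∃ j ∈ S.Delta r, sampleCov x v = lam (sampleCov x) j • v) →
        ∃ j ∈ S.Delta r, sampleCov x (est x) = lam (sampleCov x) j • est x)


theorem aux_Pinner (S : CovOp H) {s t : ℕ} (h : s ≠ t) (x y : H) : ⟪S.P s x, S.P t y⟫ = 0 := by
  rw [S.P_symm, S.P_orth s t h, inner_zero_right]

theorem aux_Pself (S : CovOp H) (s : ℕ) (x : H) : ⟪S.P s x, x⟫ = ‖S.P s x‖ ^ 2 := by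
  rw [← real_inner_self_eq_norm_sq, ← S.P_symm, S.P_idem]

theorem aux_AP (S : CovOp H) (s : ℕ) (x : H) : S.toCLM (S.P s x) = S.μ s • S.P s x := by
  have h := S.decomp (S.P s x)
  have h2 : HasSum (fun t => S.μ t • S.P t (S.P s x)) (S.μ s • S.P s (S.P s x)) :=
    hasSum_single s (fun t ht => by rw [S.P_orth t s ht, smul_zero])
  rw [S.P_idem] at h2
  exact h.unique h2

theorem aux_symm (S : CovOp H) (x y : H) : ⟪S.toCLM x, y⟫ = ⟪x, S.toCLM y⟫ := by
  have h1 : HasSum (fun s => ⟪y, S.μ s • S.P s x⟫) ⟪y, S.toCLM x⟫ :=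
    (S.decomp x).mapL (innerSL ℝ y)
  have h2 : HasSum (fun s => ⟪x, S.μ s • S.P s y⟫) ⟪x, S.toCLM y⟫ :=
    (S.decomp y).mapL (innerSL ℝ x)
  rw [real_inner_comm]
  refine h1.unique ?_
  convert h2 using 2 with s
  rw [inner_smul_right, inner_smul_right, ← S.P_symm, real_inner_comm]

theorem aux_PA (S : CovOp H) (s : ℕ) (x : H) : S.P s (S.toCLM x) = S.μ s • S.P s x := by
  refine ext_inner_right ℝ fun y => ?_
  rw [S.P_symm, aux_symm, aux_AP, inner_smul_right, inner_smul_left, ← S.P_symm]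
  simp

theorem aux_norm_sum (S : CovOp H) (c : ℕ → ℝ) (x : H) (F : Finset ℕ) :
    ‖∑ s ∈ F, c s • S.P s x‖ ^ 2 = ∑ s ∈ F, c s ^ 2 * ‖S.P s x‖ ^ 2 := by
  rw [← real_inner_self_eq_norm_sq, sum_inner]
  refine Finset.sum_congr rfl fun s hs => ?_
  rw [inner_sum, Finset.sum_eq_single s]
  · rw [inner_smul_left, inner_smul_right, real_inner_self_eq_norm_sq]
    simp; ring
  · intro t _ hts
    rw [inner_smul_left, inner_smul_right, aux_Pinner S hts.symm]; simp
  · intro h; exact absurd hs h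

theorem aux_bessel (S : CovOp H) (x : H) (F : Finset ℕ) :
    ∑ s ∈ F, ‖S.P s x‖ ^ 2 ≤ ‖x‖ ^ 2 := by
  have h1 := aux_norm_sum S (fun _ => 1) x F
  simp only [one_smul, one_pow, one_mul] at h1
  have h2 : ⟪∑ s ∈ F, S.P s x, x⟫ = ∑ s ∈ F, ‖S.P s x‖ ^ 2 := by
    rw [sum_inner]; exact Finset.sum_congr rfl fun s _ => aux_Pself S s x
  have h3 := real_inner_le_norm (∑ s ∈ F, S.P s x) x
  rw [h2, ← h1] at h3
  rw [← h1]
  nlinarith [sq_nonneg (‖∑ s ∈ F, S.P s x‖ - ‖x‖), norm_nonneg (∑ s ∈ F, S.P s x), norm_nonneg x]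

theorem aux_summable_sq (S : CovOp H) (x : H) : Summable fun s => ‖S.P s x‖ ^ 2 :=
  summable_of_sum_le (fun _ => by positivity) (aux_bessel S x)

theorem aux_summable (S : CovOp H) (c : ℕ → ℝ) (K : ℝ) (x : H)
    (hc : ∀ s, S.P s x ≠ 0 → |c s| ≤ K) : Summable fun s => c s • S.P s x := by
  let V : ℕ → Submodule ℝ H := fun s => LinearMap.range (S.P s).toLinearMap
  have hV : OrthogonalFamily ℝ (fun s => V s) fun s => (V s).subtypeₗᵢ := by
    rintro s t hst ⟨_, ⟨a, rfl⟩⟩ ⟨_, ⟨b, rfl⟩⟩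
    exact aux_Pinner S hst a b
  let f : ∀ s, V s := fun s => ⟨c s • S.P s x, ⟨c s • x, by simp⟩⟩
  have := (hV.summable_iff_norm_sq_summable f).2 ?_
  · exact this
  · refine Summable.of_nonneg_of_le (fun s => by positivity) (fun s => ?_)
      ((aux_summable_sq S x).mul_left (K ^ 2))
    show ‖c s • S.P s x‖ ^ 2 ≤ _
    rw [norm_smul, mul_pow]
    by_cases h : S.P s x = 0
    · simp [h]
    · have h1 := hc s h
      gcongr
      exact h1

theorem aux_spec (S : CovOp H) {x : H} (hx : x ≠ 0) {t : ℝ} (h : S.toCLM x = t • x) :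
    t ∈ spectrum ℝ S.toCLM := by
  rw [spectrum.mem_iff]
  intro hu
  obtain ⟨B, hB⟩ := hu.exists_left_inv
  apply hx
  have := congrArg (fun T : H →L[ℝ] H => T x) hB
  simp only [mul_apply_eq_comp, sub_apply,
    ContinuousLinearMap.algebraMap_apply, h, sub_self, map_zero, one_apply_eq_self] at this
  exact this.symm

theorem aux_g_le (S : CovOp H) (r : ℕ) {x : H} (hx : x ≠ 0) {t : ℝ} (h : S.toCLM x = t • x)
    (ht : t ≠ S.μ r) : S.g r ≤ |t - S.μ r| := by
  have := Metric.infDist_le_dist_of_mem (x := S.μ r)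
    (show t ∈ spectrum ℝ S.toCLM \ {S.μ r} from ⟨aux_spec S hx h, ht⟩)
  rw [dist_comm, Real.dist_eq] at this
  exact this

theorem aux_g_P (S : CovOp H) (r s : ℕ) (hs : s ≠ r) {x : H} (hx : S.P s x ≠ 0) :
    S.g r ≤ |S.μ s - S.μ r| :=
  aux_g_le S r hx (aux_AP S s x) (fun h => hs (S.μ_anti.injective h))

theorem aux_mu_le (S : CovOp H) (r : ℕ) {θ : H} (h1 : ‖θ‖ = 1) (h : S.toCLM θ = S.μ r • θ) :
    S.μ r ≤ ‖S.toCLM‖ := by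
  have := S.toCLM.le_opNorm θ
  rw [h, norm_smul, h1, mul_one, mul_one, Real.norm_eq_abs] at this
  exact (le_abs_self _).trans this

theorem aux_g_norm (S : CovOp H) (r : ℕ) (hg : 0 < S.g r) (hm : S.μ r ≤ ‖S.toCLM‖) :
    S.g r ≤ 2 * ‖S.toCLM‖ := by
  have hne : (spectrum ℝ S.toCLM \ {S.μ r}).Nonempty := by
    by_contra h
    rw [not_nonempty_iff_eq_empty] at h
    unfold CovOp.g at hg
    rw [h, Metric.infDist_empty] at hg
    exact lt_irrefl _ hg
  obtain ⟨t, ht⟩ := hne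
  have h1 := Metric.infDist_le_dist_of_mem (x := S.μ r) ht
  have h2 := spectrum.norm_le_norm_mul_of_mem ht.1
  have h3 : ‖(1 : H →L[ℝ] H)‖ ≤ 1 := ContinuousLinearMap.norm_id_le
  have h4 : ‖t‖ ≤ ‖S.toCLM‖ :=
    h2.trans (by simpa using mul_le_mul_of_nonneg_left h3 (norm_nonneg S.toCLM))
  rw [Real.dist_eq] at h1
  have h5 := S.μ_pos r
  rw [Real.norm_eq_abs] at h4
  have h6 := abs_le.1 h4
  refine h1.trans (abs_le.2 ⟨?_, ?_⟩) <;> linarith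

/-- Existence of the kernel component. -/
theorem aux_decomp (S : CovOp H) (x : H) : ∃ k : H, HasSum (fun s => S.P s x) (x - k) ∧
    S.toCLM k = 0 ∧ 0 ≤ ⟪k, x⟫ := by
  have h := aux_summable S (fun _ => 1) 1 x (by simp)
  simp only [one_smul] at h
  obtain ⟨p, hp⟩ := h
  refine ⟨x - p, by simpa using hp, ?_, ?_⟩
  · have h1 := hp.mapL S.toCLM
    simp only [aux_AP] at h1
    rw [map_sub, h1.unique (S.decomp x), sub_self]
  · have h1 : HasSum (fun s => ⟪x, S.P s x⟫) ⟪x, p⟫ := hp.mapL (innerSL ℝ x)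
    have h2 : ⟪x, p⟫ ≤ ‖x‖ ^ 2 := by
      refine hasSum_le_of_sum_le h1 fun F => ?_
      refine le_trans (le_of_eq (Finset.sum_congr rfl fun s _ => ?_)) (aux_bessel S x F)
      rw [real_inner_comm, aux_Pself]
    rw [inner_sub_left, real_inner_self_eq_norm_sq, real_inner_comm]
    linarith

theorem aux_gap (S : CovOp H) (r : ℕ) {θ : H} (hθ : S.SimpleVec r θ) (hg : 0 < S.g r)
    {x : H} (hx : ⟪θ, x⟫ = 0) : S.g r * ‖x‖ ≤ ‖S.μ r • x - S.toCLM x‖ := by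
  obtain ⟨k, hk, hAk, hkx⟩ := aux_decomp S x
  have hkk : 0 ≤ (S.μ r ^ 2 - S.g r ^ 2) * ⟪k, x⟫ := by
    by_cases hk0 : k = 0
    · simp [hk0]
    · have := aux_g_le S r hk0 (t := 0) (by rw [hAk, zero_smul]) (S.μ_pos r).ne
      rw [zero_sub, abs_neg, abs_of_pos (S.μ_pos r)] at this
      have : S.g r ^ 2 ≤ S.μ r ^ 2 := by gcongr
      exact mul_nonneg (by linarith) hkx
  have h1 := S.decomp (S.toCLM x)
  simp only [aux_PA] at h1
  have h2 := S.decomp x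
  have h3 := ((h1.sub (h2.const_smul (2 * S.μ r))).add (hk.const_smul (S.μ r ^ 2 - S.g r ^ 2)))
  have h4 := h3.mapL (innerSL ℝ x)
  have h5 : 0 ≤ ⟪x, S.toCLM (S.toCLM x) - (2 * S.μ r) • S.toCLM x +
      (S.μ r ^ 2 - S.g r ^ 2) • (x - k)⟫ := by
    refine h4.nonneg fun s => ?_
    have : (innerSL ℝ x) (S.μ s • S.μ s • S.P s x - (2 * S.μ r) • S.μ s • S.P s x +
        (S.μ r ^ 2 - S.g r ^ 2) • S.P s x) =
        ((S.μ s - S.μ r) ^ 2 - S.g r ^ 2) * ‖S.P s x‖ ^ 2 := by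
      simp only [innerSL_apply_apply, inner_add_right, inner_sub_right, inner_smul_right]
      rw [real_inner_comm, aux_Pself]; ring
    rw [this]
    by_cases hs : s = r
    · subst hs; rw [hθ.2, hx]; simp
    · by_cases h0 : S.P s x = 0
      · simp [h0]
      · have h6 := aux_g_P S r s hs h0
        have h7 : S.g r ^ 2 ≤ |S.μ s - S.μ r| ^ 2 := by gcongr
        rw [sq_abs] at h7
        exact mul_nonneg (by linarith) (by positivity)
  have h6 : ‖S.μ r • x - S.toCLM x‖ ^ 2 - (S.g r * ‖x‖) ^ 2 =
      ⟪x, S.toCLM (S.toCLM x) - (2 * S.μ r) • S.toCLM x +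
      (S.μ r ^ 2 - S.g r ^ 2) • (x - k)⟫ + (S.μ r ^ 2 - S.g r ^ 2) * ⟪k, x⟫ := by
    rw [norm_sub_sq_real, norm_smul, mul_pow, mul_pow, Real.norm_eq_abs, sq_abs]
    simp only [inner_add_right, inner_sub_right, inner_smul_right, inner_smul_left]
    rw [← aux_symm S x (S.toCLM x), real_inner_self_eq_norm_sq, real_inner_self_eq_norm_sq,
      real_inner_comm k x]
    simp; ring
  have h7 : (S.g r * ‖x‖) ^ 2 ≤ ‖S.μ r • x - S.toCLM x‖ ^ 2 := by linarith
  exact le_of_sq_le_sq h7 (norm_nonneg _)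

theorem aux_C (S : CovOp H) (r : ℕ) {θ : H} (hθ : S.SimpleVec r θ) (hg : 0 < S.g r) (u : H) :
    ∃ v : H, ⟪θ, v⟫ = 0 ∧ S.μ r • v - S.toCLM v = u - ⟪θ, u⟫ • θ ∧
      S.sigmaSq r u = S.μ r * ⟪S.toCLM v, v⟫ := by
  obtain ⟨k, hk, hAk, -⟩ := aux_decomp S u
  have hPθ : S.P r θ = θ := by rw [hθ.2, real_inner_self_eq_norm_sq, hθ.1]; simp
  have hAθ : S.toCLM θ = S.μ r • θ := by rw [← hPθ, aux_AP, hPθ]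
  have hμ := S.μ_pos r
  have hC : HasSum (fun s => (if s = r then 0 else (S.μ r - S.μ s)⁻¹) • S.P s u) (S.C r u) := by
    refine (aux_summable S _ (S.g r)⁻¹ u fun s hs => ?_).hasSum
    split_ifs with h
    · simp [hg.le]
    · have := aux_g_P S r s h hs
      rw [abs_inv, abs_sub_comm]
      gcongr
  have hθC : ⟪θ, S.C r u⟫ = 0 := by
    have h1 := hC.mapL (innerSL ℝ θ)
    refine h1.unique ?_
    convert hasSum_zero with s
    split_ifs with h
    · simp
    · rw [innerSL_apply_apply, inner_smul_right, ← hPθ, aux_Pinner S (Ne.symm h), mul_zero]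
  have hθk : ⟪θ, k⟫ = 0 := by
    have h1 : ⟪S.toCLM θ, k⟫ = 0 := by rw [aux_symm, hAk, inner_zero_right]
    rw [hAθ, inner_smul_left] at h1
    simpa [hμ.ne'] using h1
  have hres : S.μ r • S.C r u - S.toCLM (S.C r u) = u - k - ⟪θ, u⟫ • θ := by
    have h1 := (hC.const_smul (S.μ r)).sub (hC.mapL S.toCLM)
    have h2 := hk.sub (hasSum_single (f := fun s => if s = r then S.P s u else 0) r
      (fun t ht => by simp [ht]))
    simp only [if_true] at h2
    rw [hθ.2] at h2
    refine h1.unique ?_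
    convert h2 using 2 with s
    rw [map_smul, aux_AP]
    split_ifs with h
    · simp
    · have h3 : S.μ r - S.μ s ≠ 0 := sub_ne_zero.2 fun h' => h (S.μ_anti.injective h').symm
      rw [smul_smul, smul_smul, ← sub_smul, sub_zero, mul_comm, ← mul_sub, inv_mul_cancel₀ h3,
        one_smul]
  refine ⟨S.C r u + (S.μ r)⁻¹ • k, ?_, ?_, ?_⟩
  · rw [inner_add_right, inner_smul_right, hθC, hθk]; simp
  · rw [map_add, map_smul, hAk, smul_add, smul_smul, mul_inv_cancel₀ hμ.ne', one_smul, smul_zero,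
      add_zero, add_sub_right_comm, hres]
    abel
  · unfold CovOp.sigmaSq
    rw [map_add, map_smul, hAk, smul_zero, add_zero, inner_add_right, inner_smul_right,
      aux_symm S (S.C r u) k, hAk]
    simp

theorem aux_proj (θ z : H) (hθ : ‖θ‖ = 1) : ‖z - ⟪θ, z⟫ • θ‖ ^ 2 = ‖z‖ ^ 2 - ⟪θ, z⟫ ^ 2 := by
  rw [norm_sub_sq_real, norm_smul, hθ, inner_smul_right, real_inner_comm, Real.norm_eq_abs,
    mul_one, sq_abs]
  ring

theorem aux_proj_le (θ z : H) (hθ : ‖θ‖ = 1) : ‖z - ⟪θ, z⟫ • θ‖ ≤ ‖z‖ := by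
  refine le_of_sq_le_sq ?_ (norm_nonneg _)
  rw [aux_proj θ z hθ]
  nlinarith [sq_nonneg ⟪θ, z⟫]

theorem aux_proj_orth (θ z : H) (hθ : ‖θ‖ = 1) : ⟪θ, z - ⟪θ, z⟫ • θ⟫ = 0 := by
  rw [inner_sub_right, inner_smul_right, real_inner_self_eq_norm_sq, hθ]; simp

set_option maxHeartbeats 2000000 in
theorem aux_main (A E : H →L[ℝ] H) (hA : ∀ x y : H, ⟪A x, y⟫ = ⟪x, A y⟫)
    (μ g ρ : ℝ) (θ θt u v w : H) (hμ : 0 < μ) (hg : 0 < g) (hμN : μ ≤ ‖A‖) (hgN : g ≤ 2 * ‖A‖)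
    (hθ : ‖θ‖ = 1) (hAθ : A θ = μ • θ)
    (hgap : ∀ x : H, ⟪θ, x⟫ = 0 → g * ‖x‖ ≤ ‖μ • x - A x‖)
    (hE : ‖E‖ ≤ g / 4) (hθt : ‖θt‖ = 1) (hAt : (A + E) θt = ρ • θt) (hρ : |μ - ρ| ≤ g / 2)
    (hw : ⟪w, θt⟫ = 0) (hw2 : ρ • w - (A + E) w = u - ⟪θt, u⟫ • θt)
    (hv : ⟪θ, v⟫ = 0) (hv2 : μ • v - A v = u - ⟪θ, u⟫ • θ) :
    |ρ * ⟪(A + E) w, w⟫ - μ * ⟪A v, v⟫| * g ^ 3 ≤ 3000 * ‖A‖ ^ 2 * ‖E‖ * ‖u‖ ^ 2 := by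
  set N := ‖A‖
  set ε := ‖E‖
  have hε : 0 ≤ ε := norm_nonneg E
  have hu := norm_nonneg u
  have hN : 0 < N := hμ.trans_le hμN
  have hθA : ∀ x, ⟪θ, A x⟫ = μ * ⟪θ, x⟫ := fun x => by
    rw [← hA, hAθ, inner_smul_left]; simp
  set a := ⟪θ, θt⟫ with ha
  set q := θt - a • θ with hq
  have hθq : ⟪θ, q⟫ = 0 := aux_proj_orth θ θt hθ
  have hqn : ‖q‖ ^ 2 = 1 - a ^ 2 := by rw [hq, aux_proj θ θt hθ, hθt]; simp [ha]
  have hEt : ‖E θt‖ ≤ ε := by simpa [hθt] using E.le_opNorm θt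
  have hz : E θt = ρ • θt - A θt := by rw [← hAt]; simp
  have hza : ⟪θ, E θt⟫ = (ρ - μ) * a := by
    rw [hz, inner_sub_right, inner_smul_right, hθA]; ring
  have hzq : E θt - ⟪θ, E θt⟫ • θ = ρ • q - A q := by
    rw [hza, hz, hq, map_sub, map_smul, hAθ]; module
  have h1 : ‖ρ • q - A q‖ ≤ ε := by
    rw [← hzq]; exact (aux_proj_le θ _ hθ).trans hEt
  have hq1 : g * ‖q‖ ≤ 2 * ε := by
    have h2 := hgap q hθq
    have h3 : μ • q - A q = (μ - ρ) • q + (ρ • q - A q) := by module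
    have h4 := norm_add_le ((μ - ρ) • q) (ρ • q - A q)
    rw [← h3, norm_smul, Real.norm_eq_abs] at h4
    have h5 := mul_le_mul_of_nonneg_right hρ (norm_nonneg q)
    linarith
  have hq2 : ‖q‖ ≤ 1 / 2 := by
    by_contra h
    push Not at h
    have := mul_lt_mul_of_pos_left h hg
    linarith
  have hq0 := norm_nonneg q
  have ha2 : 3 / 4 ≤ a ^ 2 := by nlinarith
  have haabs : 1 / 2 ≤ |a| := by
    refine le_of_sq_le_sq ?_ (abs_nonneg _)
    rw [sq_abs]; linarith
  have ha1 : |a| ≤ 1 := by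
    refine le_of_sq_le_sq ?_ zero_le_one
    rw [sq_abs]; nlinarith
  have hρμ : |μ - ρ| ≤ 2 * ε := by
    have h2 := abs_real_inner_le_norm θ (E θt)
    rw [hza, hθ, abs_mul, abs_sub_comm] at h2
    nlinarith [abs_nonneg (μ - ρ)]
  -- the vector w
  set b := ⟪θ, w⟫ with hb
  set y := w - b • θ with hy
  have hθy : ⟪θ, y⟫ = 0 := aux_proj_orth θ w hθ
  have hyn : ‖y‖ ^ 2 = ‖w‖ ^ 2 - b ^ 2 := aux_proj θ w hθ
  have hab : a * b = -⟪q, y⟫ := by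
    have e1 : w = y + b • θ := by rw [hy]; abel
    have e2 : θt = q + a • θ := by rw [hq]; abel
    have h2 := hw
    rw [e1, e2] at h2
    simp only [inner_add_left, inner_add_right, inner_smul_left, inner_smul_right,
      real_inner_self_eq_norm_sq, hθ, hθq] at h2
    rw [real_inner_comm θ y, hθy, real_inner_comm q y] at h2
    simp at h2
    linarith
  have hab2 : |a| * |b| ≤ ‖q‖ * ‖y‖ := by
    rw [← abs_mul, hab, abs_neg]; exact abs_real_inner_le_norm q y
  have hy0 := norm_nonneg y
  have hw0 := norm_nonneg w
  have hb1 : |b| ≤ 2 * (‖q‖ * ‖y‖) := by nlinarith [abs_nonneg b]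
  have hb2 : b ^ 2 ≤ ‖y‖ ^ 2 / 3 := by
    have h2 : (|a| * |b|) ^ 2 ≤ (‖q‖ * ‖y‖) ^ 2 := by gcongr
    rw [mul_pow, mul_pow, sq_abs, sq_abs] at h2
    have h3 : ‖q‖ ^ 2 ≤ 1 / 4 := by nlinarith
    have h4 := mul_le_mul_of_nonneg_right h3 (sq_nonneg ‖y‖)
    have h5 := mul_le_mul_of_nonneg_right ha2 (sq_nonneg b)
    linarith
  have hwy : ‖w‖ ≤ 6 / 5 * ‖y‖ := by
    refine le_of_sq_le_sq ?_ (by positivity)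
    nlinarith [sq_nonneg ‖y‖]
  have hyres : μ • y - A y = ((μ - ρ) • w + E w) + (u - ⟪θt, u⟫ • θt) := by
    rw [← hw2, hy, map_sub, map_smul, hAθ]
    simp only [add_apply]
    module
  have hEw : ‖E w‖ ≤ ε * ‖w‖ := E.le_opNorm w
  have hpert : ‖(μ - ρ) • w + E w‖ ≤ 3 * ε * ‖w‖ := by
    refine (norm_add_le _ _).trans ?_
    rw [norm_smul, Real.norm_eq_abs]
    have := mul_le_mul_of_nonneg_right hρμ hw0
    linarith
  have hyb : g * ‖y‖ ≤ 10 * ‖u‖ := by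
    have h2 := hgap y hθy
    rw [hyres] at h2
    have h3 := norm_add_le ((μ - ρ) • w + E w) (u - ⟪θt, u⟫ • θt)
    have h4 := aux_proj_le θt u hθt
    have h5 : ε * ‖w‖ ≤ g / 4 * (6 / 5 * ‖y‖) := by gcongr
    linarith
  have hwb : g * ‖w‖ ≤ 12 * ‖u‖ := by
    have := mul_le_mul_of_nonneg_left hwy hg.le
    linarith
  have hvb : g * ‖v‖ ≤ ‖u‖ := by
    have h2 := hgap v hv
    rw [hv2] at h2
    exact h2.trans (aux_proj_le θ u hθ)
  -- difference of projections
  have hP : ‖⟪θ, u⟫ • θ - ⟪θt, u⟫ • θt‖ ≤ 4 * ‖q‖ * ‖u‖ := by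
    have e2 : θt = q + a • θ := by rw [hq]; abel
    have e3 : ⟪θt, u⟫ = ⟪q, u⟫ + a * ⟪θ, u⟫ := by
      rw [e2, inner_add_left, inner_smul_left]; simp
    have e4 : ⟪θ, u⟫ • θ - ⟪θt, u⟫ • θt =
        (‖q‖ ^ 2 * ⟪θ, u⟫) • θ - (a * ⟪q, u⟫) • θ - ⟪θt, u⟫ • q := by
      rw [hqn]
      nth_rewrite 2 [e2]
      rw [smul_add, e3]; module
    have i1 : |⟪θ, u⟫| ≤ ‖u‖ := by simpa [hθ] using abs_real_inner_le_norm θ u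
    have i2 : |⟪θt, u⟫| ≤ ‖u‖ := by simpa [hθt] using abs_real_inner_le_norm θt u
    have i3 : |⟪q, u⟫| ≤ ‖q‖ * ‖u‖ := abs_real_inner_le_norm q u
    rw [e4]
    refine (norm_sub_le _ _).trans ?_
    have j1 := norm_sub_le ((‖q‖ ^ 2 * ⟪θ, u⟫) • θ) ((a * ⟪q, u⟫) • θ)
    simp only [norm_smul, hθ, Real.norm_eq_abs, abs_mul, mul_one, abs_pow, abs_norm] at j1 ⊢
    have j2 : ‖q‖ ^ 2 * |⟪θ, u⟫| ≤ ‖q‖ * ‖u‖ := by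
      have : ‖q‖ ^ 2 ≤ ‖q‖ := by nlinarith
      gcongr
    have j3 : |a| * |⟪q, u⟫| ≤ 1 * (‖q‖ * ‖u‖) := by gcongr
    have j4 : |⟪θt, u⟫| * ‖q‖ ≤ ‖u‖ * ‖q‖ := by gcongr
    have : 0 ≤ ‖q‖ * ‖u‖ := by positivity
    linarith
  have hyv : g ^ 2 * ‖y - v‖ ≤ 44 * ε * ‖u‖ := by
    have h2 := hgap (y - v) (by rw [inner_sub_right, hθy, hv, sub_zero])
    have e : μ • (y - v) - A (y - v) =
        ((μ - ρ) • w + E w) + (⟪θ, u⟫ • θ - ⟪θt, u⟫ • θt) := by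
      have : μ • (y - v) - A (y - v) = (μ • y - A y) - (μ • v - A v) := by
        rw [map_sub]; module
      rw [this, hyres, hv2]; module
    rw [e] at h2
    have h3 := (h2.trans (norm_add_le _ _)).trans (add_le_add hpert hP)
    have h4 := mul_le_mul_of_nonneg_left h3 hg.le
    have h5 := mul_le_mul_of_nonneg_left hwb hε
    have h6 := mul_le_mul_of_nonneg_right hq1 hu
    linarith
  have hgb : g ^ 2 * |b| ≤ 40 * ε * ‖u‖ := by
    have h2 : g ^ 2 * |b| ≤ g ^ 2 * (2 * (‖q‖ * ‖y‖)) := by gcongr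
    have h3 : (g * ‖q‖) * (g * ‖y‖) ≤ (2 * ε) * (10 * ‖u‖) := by gcongr
    linarith
  have hd : g ^ 2 * ‖w - v‖ ≤ 84 * ε * ‖u‖ := by
    have e : w - v = (y - v) + b • θ := by rw [hy]; abel
    have h2 := norm_add_le (y - v) (b • θ)
    rw [← e, norm_smul, hθ, Real.norm_eq_abs, mul_one] at h2
    have h3 := mul_le_mul_of_nonneg_left h2 (sq_nonneg g)
    linarith
  -- final
  have e : ρ * ⟪(A + E) w, w⟫ - μ * ⟪A v, v⟫ =
      (ρ - μ) * ⟪(A + E) w, w⟫ + μ * (⟪E w, w⟫ + (⟪A w, w - v⟫ + ⟪A (w - v), v⟫)) := by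
    simp only [add_apply, inner_add_left, inner_sub_right, map_sub, inner_sub_left]
    ring
  have hv0 := norm_nonneg v
  have hd0 := norm_nonneg (w - v)
  have t2 : |⟪E w, w⟫| ≤ ε * ‖w‖ ^ 2 := by
    have := mul_le_mul_of_nonneg_right hEw hw0
    linarith [abs_real_inner_le_norm (E w) w]
  have t1 : |⟪(A + E) w, w⟫| ≤ 3 / 2 * N * ‖w‖ ^ 2 := by
    have k1 := abs_real_inner_le_norm (A w) w
    have k2 := mul_le_mul_of_nonneg_right (A.le_opNorm w) hw0
    have k3 := abs_add_le ⟪A w, w⟫ ⟪E w, w⟫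
    rw [← inner_add_left, ← add_apply] at k3
    have k4 : ε * ‖w‖ ^ 2 ≤ N / 2 * ‖w‖ ^ 2 := by
      gcongr; linarith
    change ‖A w‖ * ‖w‖ ≤ N * ‖w‖ * ‖w‖ at k2
    linarith
  have t3 : |⟪A w, w - v⟫| ≤ N * ‖w‖ * ‖w - v‖ :=
    (abs_real_inner_le_norm _ _).trans (mul_le_mul_of_nonneg_right (A.le_opNorm w) hd0)
  have t4 : |⟪A (w - v), v⟫| ≤ N * ‖w - v‖ * ‖v‖ :=
    (abs_real_inner_le_norm _ _).trans (mul_le_mul_of_nonneg_right (A.le_opNorm _) hv0)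
  have tot : |ρ * ⟪(A + E) w, w⟫ - μ * ⟪A v, v⟫| ≤
      2 * ε * (3 / 2 * N * ‖w‖ ^ 2) +
        N * (ε * ‖w‖ ^ 2 + (N * ‖w‖ * ‖w - v‖ + N * ‖w - v‖ * ‖v‖)) := by
    rw [e]
    refine (abs_add_le _ _).trans ?_
    rw [abs_mul, abs_mul, abs_of_pos hμ]
    rw [abs_sub_comm] at hρμ
    have k : |⟪E w, w⟫ + (⟪A w, w - v⟫ + ⟪A (w - v), v⟫)| ≤
        ε * ‖w‖ ^ 2 + (N * ‖w‖ * ‖w - v‖ + N * ‖w - v‖ * ‖v‖) :=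
      (abs_add_le _ _).trans (add_le_add t2 ((abs_add_le _ _).trans (add_le_add t3 t4)))
    gcongr
  have tot2 := mul_le_mul_of_nonneg_right tot (by positivity : 0 ≤ g ^ 3)
  refine tot2.trans ?_
  have f1 : (g * ‖w‖) ^ 2 ≤ (12 * ‖u‖) ^ 2 := by gcongr
  have f2 : (4 * ε * N * g) * (g * ‖w‖) ^ 2 ≤ (4 * ε * N * (2 * N)) * (12 * ‖u‖) ^ 2 := by gcongr
  have f3 : N ^ 2 * ((g * ‖w‖) * (g ^ 2 * ‖w - v‖)) ≤
      N ^ 2 * ((12 * ‖u‖) * (84 * ε * ‖u‖)) := by gcongr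
  have f4 : N ^ 2 * ((g * ‖v‖) * (g ^ 2 * ‖w - v‖)) ≤
      N ^ 2 * (‖u‖ * (84 * ε * ‖u‖)) := by gcongr
  have f5 : 0 ≤ N ^ 2 * ε * ‖u‖ ^ 2 := by positivity
  linarith

theorem aux_sqrt (x y : ℝ) (hy : 0 < y) : |√x / √y - 1| ≤ y⁻¹ * |x - y| := by
  have hsy : 0 < √y := Real.sqrt_pos.2 hy
  have e : √x / √y - 1 = (√x - √y) / √y := by field_simp
  have hy2 : √y ^ 2 = y := Real.sq_sqrt hy.le
  rw [e, abs_div, abs_of_pos hsy, div_le_iff₀ hsy]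
  have key : √y * |√x - √y| ≤ |x - y| := by
    rcases le_total 0 x with hx | hx
    · have hx2 : √x ^ 2 = x := Real.sq_sqrt hx
      have : x - y = (√x + √y) * (√x - √y) := by rw [← hx2, ← hy2]; simp; ring
      rw [this, abs_mul]
      have h0 := Real.sqrt_nonneg x
      rw [abs_of_pos (by linarith : 0 < √x + √y)]
      gcongr
      linarith
    · rw [Real.sqrt_eq_zero_of_nonpos hx, zero_sub, abs_neg, abs_of_pos hsy,
        abs_of_nonpos (by linarith)]
      nlinarith
  calc |√x - √y| = y⁻¹ * (√y * |√x - √y|) * √y := by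
        have : y⁻¹ * (√y * |√x - √y|) * √y = y⁻¹ * √y ^ 2 * |√x - √y| := by ring
        rw [this, hy2, inv_mul_cancel₀ hy.ne', one_mul]
    _ ≤ _ := by gcongr

/-- **Lemma 5.3 (perturbation of `σ_r²`).** If `Σ̃ = Σ + E` with `E` self-adjoint,
`‖E‖ ≤ g_r/4`, and `(ρ̃, θ̃)` is the (unique) eigenpair of `Σ̃` near `μ_r` and
`w = C_r(Σ̃)u` (characterized by `⟪w, θ̃⟫ = 0` and `(ρ̃ - Σ̃)w = u - ⟪θ̃, u⟫θ̃`,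
so that `σ_r²(Σ̃; u) = ρ̃⟨Σ̃w, w⟩`), then
`|σ_r²(Σ̃;u) - σ_r²(Σ;u)| ≲ (‖Σ‖²/g_r²)(‖E‖/g_r)‖u‖²` and, if `σ_r(Σ;u) > 0`,
`|σ_r(Σ̃;u)/σ_r(Σ;u) - 1| ≲ σ_r⁻²(Σ;u)(‖Σ‖²/g_r²)(‖E‖/g_r)‖u‖²`. -/
theorem stmt18 :
    ∃ C : ℝ, 0 < C ∧ ∃ C' : ℝ, 0 < C' ∧
      ∀ (H : Type) (_ : NormedAddCommGroup H),
        ∀ (_ : InnerProductSpace ℝ H) (_ : CompleteSpace H)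
          (S : CovOp H) (r : ℕ) (θ : H) (E : H →L[ℝ] H) (u θt w : H) (ρt : ℝ),
          S.SimpleVec r θ →
          (∀ x y : H, ⟪E x, y⟫ = ⟪x, E y⟫) →
          ‖E‖ ≤ S.g r / 4 →
          ‖θt‖ = 1 →
          (S.toCLM + E) θt = ρt • θt →
          ρt ∈ Ioo (S.μ r - S.g r / 2) (S.μ r + S.g r / 2) →
          ⟪w, θt⟫ = 0 →
          ρt • w - (S.toCLM + E) w = u - ⟪θt, u⟫ • θt →
          |ρt * ⟪(S.toCLM + E) w, w⟫ - S.sigmaSq r u| ≤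
              C * (‖S.toCLM‖ ^ 2 / S.g r ^ 2) * (‖E‖ / S.g r) * ‖u‖ ^ 2 ∧
            (0 < S.sigmaSq r u →
              |Real.sqrt (ρt * ⟪(S.toCLM + E) w, w⟫) / Real.sqrt (S.sigmaSq r u) - 1| ≤
                C' * (S.sigmaSq r u)⁻¹ * (‖S.toCLM‖ ^ 2 / S.g r ^ 2) * (‖E‖ / S.g r) *
                  ‖u‖ ^ 2) := by
  refine ⟨3000, by norm_num, 3000, by norm_num, ?_⟩
  intro H _ _ _ S r θ E u θt w ρ hθ _ hE hθt hAt hρ hw hw2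
  have hg : 0 < S.g r := by linarith [hρ.1, hρ.2]
  have hPθ : S.P r θ = θ := by rw [hθ.2, real_inner_self_eq_norm_sq, hθ.1]; simp
  have hAθ : S.toCLM θ = S.μ r • θ := by rw [← hPθ, aux_AP, hPθ]
  have hμN := aux_mu_le S r hθ.1 hAθ
  obtain ⟨v, hv, hv2, hv3⟩ := aux_C S r hθ hg u
  have hm := aux_main S.toCLM E (aux_symm S) (S.μ r) (S.g r) ρ θ θt u v w (S.μ_pos r) hg hμN
    (aux_g_norm S r hg hμN) hθ.1 hAθ (fun x hx => aux_gap S r hθ hg hx) hE hθt hAt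
    (abs_le.2 ⟨by linarith [hρ.2], by linarith [hρ.1]⟩) hw hw2 hv hv2
  rw [← hv3] at hm
  have hfirst : |ρ * ⟪(S.toCLM + E) w, w⟫ - S.sigmaSq r u| ≤
      3000 * (‖S.toCLM‖ ^ 2 / S.g r ^ 2) * (‖E‖ / S.g r) * ‖u‖ ^ 2 := by
    have e : 3000 * (‖S.toCLM‖ ^ 2 / S.g r ^ 2) * (‖E‖ / S.g r) * ‖u‖ ^ 2 =
        3000 * ‖S.toCLM‖ ^ 2 * ‖E‖ * ‖u‖ ^ 2 / S.g r ^ 3 := by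
      field_simp
    rw [e, le_div_iff₀ (by positivity)]
    exact hm
  refine ⟨hfirst, fun hpos => ?_⟩
  refine (aux_sqrt _ _ hpos).trans ?_
  refine (mul_le_mul_of_nonneg_left hfirst (inv_nonneg.2 hpos.le)).trans (le_of_eq ?_)
  ring

end KLN
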